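/- Let N ≥ 2 be an integer, let ψ be a Cartan-Hadamard model function, and let H be the associated function. Assume there exist r₀ > 0 and K > 0 such that H'''(r) ≤ K H'(r)/H(r) for all r ≥ r₀. Then -H''(r) ≤ √2 + 2K·log((1+√2)/√2) for all r ≥ r₀; in particular there exists a constant K̂ > 0, depending only on K, such that -H''(r) ≤ K̂ for all r ≥ r₀. -/

import Mathlib

open Real MeasureTheory Set Filter

/-- The function `H` associated with a model function `ψ` on an `N`-dimensional model
manifold: `H r = ∫₀^r (∫₀^s ψ(t)^{N-1} dt) / ψ(s)^{N-1} ds`. -/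
noncomputable def Hfun (N : ℕ) (ψ : ℝ → ℝ) (r : ℝ) : ℝ :=
  ∫ s in (0:ℝ)..r, (∫ t in (0:ℝ)..s, ψ t ^ (N - 1)) / ψ s ^ (N - 1)

/-! Where `H''' ≤ K H' / H`, the function `H'' - K log H` is nonincreasing. On the window
`[r, r + √(H r)]` the bound `H' ≤ √2 √H` lets `√H` grow by at most the factor `1 + 1 / √2`, so
`H''` stays below `H''(r) + 2K log (1 + 1 / √2)` there. If `H''(r)` were too negative, `H'`,
which starts at no more than `√2 √(H r)`, would become negative before the end of the window.

With `w = ψ ^ (N - 1)` nondecreasing, `H'(r) = (∫₀^r w) / w r` satisfies `H'(r) ≤ r` and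
`H'' ≤ 1`. Hence `H'² - 2H` is nonincreasing and tends to `0` at the origin, which gives
the bound `H'² ≤ 2H` used above. -/

section Comparison

variable {f g : ℝ → ℝ} {r s c l K : ℝ}

theorem sqrt_le_sqrt_add_of_deriv_le_mul_sqrt (hf : ∀ x ≥ r, DifferentiableAt ℝ f x)
    (hpos : ∀ x ≥ r, 0 < f x) (hle : ∀ x ≥ r, deriv f x ≤ c * √(f x)) (hrs : r ≤ s) :
    √(f s) ≤ √(f r) + c / 2 * (s - r) := by
  have hd (x) (hx : r ≤ x) : HasDerivAt (fun y ↦ √(f y)) (deriv f x / (2 * √(f x))) x :=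
    (hf x hx).hasDerivAt.sqrt (hpos x hx).ne'
  have hderiv (x) (hx : x ∈ interior (Ici r)) : deriv (fun y ↦ √(f y)) x ≤ c / 2 := by
    have hxr : r ≤ x := interior_subset hx
    have hsqrt : 0 < √(f x) := Real.sqrt_pos.2 (hpos x hxr)
    rw [(hd x hxr).deriv, div_le_div_iff₀ (by positivity) two_pos]
    linarith [hle x hxr]
  have := (convex_Ici r).image_sub_le_mul_sub_of_deriv_le
    (fun x hx ↦ (hd x hx).continuousAt.continuousWithinAt)
    (fun x hx ↦ (hd x (interior_subset hx)).differentiableAt.differentiableWithinAt)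
    hderiv r self_mem_Ici s hrs hrs
  linarith

theorem sub_le_mul_log_div_of_deriv_le (hf : ∀ x ≥ r, DifferentiableAt ℝ f x)
    (hg : ∀ x ≥ r, DifferentiableAt ℝ g x) (hpos : ∀ x ≥ r, 0 < f x)
    (hle : ∀ x ≥ r, deriv g x ≤ K * deriv f x / f x) (hrs : r ≤ s) :
    g s - g r ≤ K * log (f s / f r) := by
  have hd (x) (hx : r ≤ x) :
      HasDerivAt (fun y ↦ g y - K * log (f y)) (deriv g x - K * (deriv f x / f x)) x :=
    (hg x hx).hasDerivAt.sub (((hf x hx).hasDerivAt.log (hpos x hx).ne').const_mul K)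
  have hanti : AntitoneOn (fun y ↦ g y - K * log (f y)) (Ici r) := by
    refine antitoneOn_of_deriv_nonpos (convex_Ici r)
      (fun x hx ↦ (hd x hx).continuousAt.continuousWithinAt)
      (fun x hx ↦ (hd x (interior_subset hx)).differentiableAt.differentiableWithinAt)
      fun x hx ↦ ?_
    rw [(hd x (interior_subset hx)).deriv, ← mul_div_assoc]
    exact sub_nonpos.2 (hle x (interior_subset hx))
  rw [log_div (hpos s hrs).ne' (hpos r le_rfl).ne']
  linarith [hanti self_mem_Ici hrs hrs]

theorem deriv_deriv_le_add_mul_log (hK : 0 ≤ K) (hc : 0 ≤ c)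
    (hf : ∀ x ≥ r, DifferentiableAt ℝ f x) (hf'' : ∀ x ≥ r, DifferentiableAt ℝ (deriv (deriv f)) x)
    (hpos : ∀ x ≥ r, 0 < f x) (hle : ∀ x ≥ r, deriv f x ≤ c * √(f x))
    (hf''' : ∀ x ≥ r, deriv (deriv (deriv f)) x ≤ K * deriv f x / f x)
    (hs : s ∈ Icc r (r + l * √(f r))) :
    deriv (deriv f) s ≤ deriv (deriv f) r + 2 * K * log (1 + c * l / 2) := by
  have hsqrt : 0 < √(f r) := Real.sqrt_pos.2 (hpos r le_rfl)
  have hratio : √(f s / f r) ≤ 1 + c * l / 2 := by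
    rw [sqrt_div (hpos s hs.1).le, div_le_iff₀ hsqrt]
    calc √(f s) ≤ √(f r) + c / 2 * (s - r) :=
          sqrt_le_sqrt_add_of_deriv_le_mul_sqrt hf hpos hle hs.1
      _ ≤ √(f r) + c / 2 * (l * √(f r)) := by gcongr; linarith [hs.2]
      _ = (1 + c * l / 2) * √(f r) := by ring
  have hfrac : 0 < f s / f r := div_pos (hpos s hs.1) (hpos r le_rfl)
  have hlog : log (f s / f r) ≤ 2 * log (1 + c * l / 2) := by
    have := log_le_log (Real.sqrt_pos.2 hfrac) hratio
    rw [log_sqrt hfrac.le] at this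
    linarith
  have hgrowth := sub_le_mul_log_div_of_deriv_le hf hf'' hpos hf''' hs.1
  linarith [mul_le_mul_of_nonneg_left hlog hK]

theorem neg_deriv_deriv_le_div_add_mul_log (hK : 0 ≤ K) (hl : 0 < l)
    (hf : ∀ x ≥ r, DifferentiableAt ℝ f x) (hf' : ∀ x ≥ r, DifferentiableAt ℝ (deriv f) x)
    (hf'' : ∀ x ≥ r, DifferentiableAt ℝ (deriv (deriv f)) x) (hpos : ∀ x ≥ r, 0 < f x)
    (hnonneg : ∀ x ≥ r, 0 ≤ deriv f x) (hle : ∀ x ≥ r, deriv f x ≤ c * √(f x))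
    (hf''' : ∀ x ≥ r, deriv (deriv (deriv f)) x ≤ K * deriv f x / f x) :
    -deriv (deriv f) r ≤ c / l + 2 * K * log (1 + c * l / 2) := by
  have hsqrt : 0 < √(f r) := Real.sqrt_pos.2 (hpos r le_rfl)
  have hc : 0 ≤ c :=
    nonneg_of_mul_nonneg_left ((hnonneg r le_rfl).trans (hle r le_rfl)) hsqrt
  have hend : r ≤ r + l * √(f r) := le_add_of_nonneg_right (by positivity)
  have hmvt := (convex_Icc r (r + l * √(f r))).image_sub_le_mul_sub_of_deriv_le
    (fun x hx ↦ (hf' x hx.1).continuousAt.continuousWithinAt)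
    (fun x hx ↦ (hf' x (interior_subset hx).1).differentiableWithinAt)
    (fun x hx ↦ deriv_deriv_le_add_mul_log hK hc hf hf'' hpos hle hf''' (interior_subset hx))
    r (left_mem_Icc.2 hend) _ (right_mem_Icc.2 hend) hend
  have hwindow :
      0 ≤ c + (deriv (deriv f) r + 2 * K * log (1 + c * l / 2)) * l := by
    refine nonneg_of_mul_nonneg_left ?_ hsqrt
    linarith [hnonneg _ hend, hle r le_rfl]
  rw [← sub_le_iff_le_add, le_div_iff₀ hl]
  linarith

end Comparison

section Primitive

variable {f : ℝ → ℝ} {a b m x : ℝ}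

theorem intervalIntegrable_of_monotoneOn_Ioi (hf : MonotoneOn f (Ioi a))
    (hm : ∀ x ∈ Ioi a, m ≤ f x) (hab : a ≤ b) : IntervalIntegrable f volume a b := by
  refine (intervalIntegrable_const (c := max |m| |f b|)).mono_fun' ?_ ?_
  · rw [uIoc_of_le hab]
    exact (aemeasurable_restrict_of_monotoneOn measurableSet_Ioc
      (hf.mono Ioc_subset_Ioi_self)).aestronglyMeasurable
  · rw [uIoc_of_le hab]
    filter_upwards [ae_restrict_mem measurableSet_Ioc] with x hx
    exact abs_le_max_abs_abs (hm x hx.1) (hf hx.1 (hx.1.trans_le hx.2) hx.2)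

theorem hasDerivAt_integral_of_continuousOn_Ioi (hf : ContinuousOn f (Ioi a))
    (hint : IntervalIntegrable f volume a x) (hx : a < x) :
    HasDerivAt (fun y ↦ ∫ t in a..y, f t) (f x) x :=
  intervalIntegral.integral_hasDerivAt_right hint (hf.stronglyMeasurableAtFilter isOpen_Ioi x hx)
    (hf.continuousAt (Ioi_mem_nhds hx))

end Primitive

/-- The ratio of `∫₀^s w` to `w s`. For `w = ψ ^ (N - 1)` it is, in the model manifold of `ψ`, the
volume of the geodesic ball of radius `s` over the area of its boundary, and it is the
derivative of `H`. -/
noncomputable def volumeAreaRatio (w : ℝ → ℝ) (s : ℝ) : ℝ :=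
  (∫ t in (0:ℝ)..s, w t) / w s

/-- The primitive of `volumeAreaRatio w` vanishing at `0`, a solution of `(w u')' = w`. For
`w = ψ ^ (N - 1)` it is `H`, the radial solution of `Δ u = 1` that vanishes at the pole. -/
noncomputable def torsionFunction (w : ℝ → ℝ) (r : ℝ) : ℝ :=
  ∫ s in (0:ℝ)..r, volumeAreaRatio w s

theorem Hfun_eq_torsionFunction (N : ℕ) (ψ : ℝ → ℝ) :
    Hfun N ψ = torsionFunction (fun t ↦ ψ t ^ (N - 1)) :=
  rfl

section Weight

variable {w : ℝ → ℝ} {x : ℝ}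

theorem intervalIntegrable_weight (hpos : ∀ x > 0, 0 < w x) (hmono : MonotoneOn w (Ioi 0))
    (hx : 0 ≤ x) : IntervalIntegrable w volume 0 x :=
  intervalIntegrable_of_monotoneOn_Ioi hmono (fun y hy ↦ (hpos y hy).le) hx

theorem volumeAreaRatio_pos (hpos : ∀ x > 0, 0 < w x) (hmono : MonotoneOn w (Ioi 0))
    (hx : 0 < x) : 0 < volumeAreaRatio w x :=
  div_pos (intervalIntegral.intervalIntegral_pos_of_pos_on
    (intervalIntegrable_weight hpos hmono hx.le) (fun t ht ↦ hpos t ht.1) hx) (hpos x hx)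

theorem volumeAreaRatio_le_self (hpos : ∀ x > 0, 0 < w x) (hmono : MonotoneOn w (Ioi 0))
    (hx : 0 < x) : volumeAreaRatio w x ≤ x := by
  refine (div_le_iff₀ (hpos x hx)).2 ?_
  calc ∫ t in (0:ℝ)..x, w t ≤ ∫ _ in (0:ℝ)..x, w x :=
        intervalIntegral.integral_mono_on_of_le_Ioo hx.le
          (intervalIntegrable_weight hpos hmono hx.le) intervalIntegrable_const
          fun t ht ↦ hmono ht.1 hx ht.2.le
    _ = x * w x := by simp

theorem hasDerivAt_integral_weight (hpos : ∀ x > 0, 0 < w x) (hmono : MonotoneOn w (Ioi 0))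
    (hw : DifferentiableOn ℝ w (Ioi 0)) (hx : 0 < x) :
    HasDerivAt (fun s ↦ ∫ t in (0:ℝ)..s, w t) (w x) x :=
  hasDerivAt_integral_of_continuousOn_Ioi hw.continuousOn
    (intervalIntegrable_weight hpos hmono hx.le) hx

theorem hasDerivAt_volumeAreaRatio (hpos : ∀ x > 0, 0 < w x) (hmono : MonotoneOn w (Ioi 0))
    (hw : DifferentiableOn ℝ w (Ioi 0)) (hx : 0 < x) :
    HasDerivAt (volumeAreaRatio w) (1 - volumeAreaRatio w x * deriv w x / w x) x := by
  have hw' : HasDerivAt w (deriv w x) x := (hw.differentiableAt (Ioi_mem_nhds hx)).hasDerivAt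
  refine ((hasDerivAt_integral_weight hpos hmono hw hx).div hw' (hpos x hx).ne').congr_deriv ?_
  have := (hpos x hx).ne'
  simp only [volumeAreaRatio]
  field_simp

theorem differentiableOn_volumeAreaRatio (hpos : ∀ x > 0, 0 < w x)
    (hmono : MonotoneOn w (Ioi 0)) (hw : DifferentiableOn ℝ w (Ioi 0)) :
    DifferentiableOn ℝ (volumeAreaRatio w) (Ioi 0) := fun _ hx ↦
  (hasDerivAt_volumeAreaRatio hpos hmono hw hx).differentiableAt.differentiableWithinAt

theorem differentiableOn_deriv_volumeAreaRatio (hpos : ∀ x > 0, 0 < w x)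
    (hmono : MonotoneOn w (Ioi 0)) (hw : DifferentiableOn ℝ w (Ioi 0))
    (hw' : DifferentiableOn ℝ (deriv w) (Ioi 0)) :
    DifferentiableOn ℝ (deriv (volumeAreaRatio w)) (Ioi 0) :=
  ((((differentiableOn_volumeAreaRatio hpos hmono hw).mul hw').div hw
    fun x hx ↦ (hpos x hx).ne').const_sub 1).congr
    fun _ hx ↦ (hasDerivAt_volumeAreaRatio hpos hmono hw hx).deriv

theorem deriv_volumeAreaRatio_le_one (hpos : ∀ x > 0, 0 < w x) (hmono : MonotoneOn w (Ioi 0))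
    (hw : DifferentiableOn ℝ w (Ioi 0)) (hx : 0 < x) : deriv (volumeAreaRatio w) x ≤ 1 := by
  have hw' : 0 ≤ deriv w x := by
    rw [← derivWithin_of_isOpen isOpen_Ioi hx]
    exact hmono.derivWithin_nonneg
  rw [(hasDerivAt_volumeAreaRatio hpos hmono hw hx).deriv]
  exact sub_le_self _
    (div_nonneg (mul_nonneg (volumeAreaRatio_pos hpos hmono hx).le hw') (hpos x hx).le)

theorem intervalIntegrable_volumeAreaRatio (hpos : ∀ x > 0, 0 < w x)
    (hmono : MonotoneOn w (Ioi 0)) (hw : DifferentiableOn ℝ w (Ioi 0)) (hx : 0 ≤ x) :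
    IntervalIntegrable (volumeAreaRatio w) volume 0 x := by
  refine (continuous_id.intervalIntegrable 0 x).mono_fun' ?_ ?_
  · rw [uIoc_of_le hx]
    exact ((differentiableOn_volumeAreaRatio hpos hmono hw).continuousOn.mono
      Ioc_subset_Ioi_self).aestronglyMeasurable measurableSet_Ioc
  · rw [uIoc_of_le hx]
    filter_upwards [ae_restrict_mem measurableSet_Ioc] with t ht
    rw [norm_of_nonneg (volumeAreaRatio_pos hpos hmono ht.1).le]
    exact volumeAreaRatio_le_self hpos hmono ht.1

theorem torsionFunction_pos (hpos : ∀ x > 0, 0 < w x) (hmono : MonotoneOn w (Ioi 0))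
    (hw : DifferentiableOn ℝ w (Ioi 0)) (hx : 0 < x) : 0 < torsionFunction w x :=
  intervalIntegral.intervalIntegral_pos_of_pos_on
    (intervalIntegrable_volumeAreaRatio hpos hmono hw hx.le)
    (fun _ ht ↦ volumeAreaRatio_pos hpos hmono ht.1) hx

theorem hasDerivAt_torsionFunction (hpos : ∀ x > 0, 0 < w x) (hmono : MonotoneOn w (Ioi 0))
    (hw : DifferentiableOn ℝ w (Ioi 0)) (hx : 0 < x) :
    HasDerivAt (torsionFunction w) (volumeAreaRatio w x) x :=
  hasDerivAt_integral_of_continuousOn_Ioi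
    (differentiableOn_volumeAreaRatio hpos hmono hw).continuousOn
    (intervalIntegrable_volumeAreaRatio hpos hmono hw hx.le) hx

theorem antitoneOn_sq_volumeAreaRatio_sub_two_mul_torsionFunction (hpos : ∀ x > 0, 0 < w x)
    (hmono : MonotoneOn w (Ioi 0)) (hw : DifferentiableOn ℝ w (Ioi 0)) :
    AntitoneOn (fun x ↦ volumeAreaRatio w x ^ 2 - 2 * torsionFunction w x) (Ioi 0) := by
  have hd (x) (hx : 0 < x) :
      HasDerivAt (fun x ↦ volumeAreaRatio w x ^ 2 - 2 * torsionFunction w x)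
        (2 * volumeAreaRatio w x * (deriv (volumeAreaRatio w) x - 1)) x := by
    have hratio := (differentiableOn_volumeAreaRatio hpos hmono hw).hasDerivAt (Ioi_mem_nhds hx)
    refine ((hratio.fun_pow 2).sub
      ((hasDerivAt_torsionFunction hpos hmono hw hx).const_mul 2)).congr_deriv ?_
    ring
  refine antitoneOn_of_deriv_nonpos (convex_Ioi 0)
    (fun x hx ↦ (hd x hx).continuousAt.continuousWithinAt)
    (fun x hx ↦ (hd x (interior_subset hx)).differentiableAt.differentiableWithinAt)
    fun x hx ↦ ?_
  have hx0 : 0 < x := interior_subset hx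
  rw [(hd x hx0).deriv]
  exact mul_nonpos_of_nonneg_of_nonpos
    (mul_nonneg two_pos.le (volumeAreaRatio_pos hpos hmono hx0).le)
    (sub_nonpos.2 (deriv_volumeAreaRatio_le_one hpos hmono hw hx0))

theorem sq_volumeAreaRatio_le_two_mul_torsionFunction (hpos : ∀ x > 0, 0 < w x)
    (hmono : MonotoneOn w (Ioi 0)) (hw : DifferentiableOn ℝ w (Ioi 0)) (hx : 0 < x) :
    volumeAreaRatio w x ^ 2 ≤ 2 * torsionFunction w x := by
  have hle (ε) (hε : ε ∈ Ioc 0 x) :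
      volumeAreaRatio w x ^ 2 - 2 * torsionFunction w x ≤ ε ^ 2 := by
    have hanti := antitoneOn_sq_volumeAreaRatio_sub_two_mul_torsionFunction hpos hmono hw
      hε.1 hx hε.2
    have hsq : volumeAreaRatio w ε ^ 2 ≤ ε ^ 2 := pow_le_pow_left₀
      (volumeAreaRatio_pos hpos hmono hε.1).le (volumeAreaRatio_le_self hpos hmono hε.1) 2
    linarith [torsionFunction_pos hpos hmono hw hε.1]
  have hlim : Tendsto (fun ε : ℝ ↦ ε ^ 2) (nhdsWithin 0 (Ioi 0)) (nhds 0) :=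
    tendsto_nhdsWithin_of_tendsto_nhds ((continuous_pow 2).tendsto' 0 0 (zero_pow two_ne_zero))
  exact sub_nonpos.1 <| ge_of_tendsto hlim <|
    eventually_of_mem (Ioc_mem_nhdsGT hx) hle

theorem volumeAreaRatio_le_sqrt_two_mul_sqrt (hpos : ∀ x > 0, 0 < w x)
    (hmono : MonotoneOn w (Ioi 0)) (hw : DifferentiableOn ℝ w (Ioi 0)) (hx : 0 < x) :
    volumeAreaRatio w x ≤ √2 * √(torsionFunction w x) := by
  rw [← sqrt_mul two_pos.le]
  exact le_sqrt_of_sq_le (sq_volumeAreaRatio_le_two_mul_torsionFunction hpos hmono hw hx)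

end Weight

theorem monotoneOn_Ici_of_convexOn_of_le {f : ℝ → ℝ} {a : ℝ} (hf : ConvexOn ℝ (Ici a) f)
    (hmin : ∀ x ∈ Ici a, f a ≤ f x) : MonotoneOn f (Ici a) := by
  intro x hx y hy hxy
  rcases eq_or_lt_of_le (mem_Ici.1 hx) with rfl | hax
  · exact hmin y hy
  · exact hf.le_right_of_left_le'' self_mem_Ici hy hax hxy (hmin x hx)

theorem monotoneOn_pow_Ioi_of_convexOn {ψ : ℝ → ℝ} (hψ0 : ψ 0 = 0) (hψpos : ∀ r > 0, 0 < ψ r)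
    (hconv : ConvexOn ℝ (Ici 0) ψ) (n : ℕ) : MonotoneOn (fun t ↦ ψ t ^ n) (Ioi 0) := by
  have hmin (x) (hx : x ∈ Ici (0:ℝ)) : ψ 0 ≤ ψ x := by
    rcases eq_or_lt_of_le (mem_Ici.1 hx) with rfl | hx
    · exact le_rfl
    · exact hψ0.trans_le (hψpos x hx).le
  exact fun x hx y hy hxy ↦ pow_le_pow_left₀ (hψpos x hx).le
    (monotoneOn_Ici_of_convexOn_of_le hconv hmin (Ioi_subset_Ici_self hx)
      (Ioi_subset_Ici_self hy) hxy) n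

theorem sqrt_two_add_two_mul_log_pos {K : ℝ} (hK : 0 ≤ K) :
    0 < √2 + 2 * K * log ((1 + √2) / √2) := by
  have hlog : 0 ≤ log ((1 + √2) / √2) :=
    log_nonneg ((one_le_div (sqrt_pos.2 two_pos)).2 (le_add_of_nonneg_left zero_le_one))
  positivity

theorem statement5_general {w : ℝ → ℝ} (hpos : ∀ x > 0, 0 < w x) (hmono : MonotoneOn w (Ioi 0))
    (hw : DifferentiableOn ℝ w (Ioi 0)) (hw' : DifferentiableOn ℝ (deriv w) (Ioi 0))
    {r₀ K : ℝ} (hr₀ : 0 < r₀) (hK : 0 ≤ K)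
    (hH3 : ∀ r ≥ r₀, deriv (deriv (deriv (torsionFunction w))) r
      ≤ K * deriv (torsionFunction w) r / torsionFunction w r) :
    ∀ r ≥ r₀, -deriv (deriv (torsionFunction w)) r ≤ √2 + 2 * K * log ((1 + √2) / √2) := by
  intro r hr
  have hr_pos : ∀ x ≥ r, x ∈ Ioi 0 := fun x hx ↦ hr₀.trans_le (hr.trans hx)
  have hderiv : EqOn (deriv (torsionFunction w)) (volumeAreaRatio w) (Ioi 0) := fun x hx ↦
    (hasDerivAt_torsionFunction hpos hmono hw hx).deriv
  have hdiff' := (differentiableOn_volumeAreaRatio hpos hmono hw).congr hderiv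
  have hdiff'' := (differentiableOn_deriv_volumeAreaRatio hpos hmono hw hw').congr
    (hderiv.deriv isOpen_Ioi)
  have hbound := neg_deriv_deriv_le_div_add_mul_log (f := torsionFunction w) (c := √2) (r := r)
    hK one_pos
    (fun x hx ↦ (hasDerivAt_torsionFunction hpos hmono hw (hr_pos x hx)).differentiableAt)
    (fun x hx ↦ hdiff'.differentiableAt (Ioi_mem_nhds (hr_pos x hx)))
    (fun x hx ↦ hdiff''.differentiableAt (Ioi_mem_nhds (hr_pos x hx)))
    (fun x hx ↦ torsionFunction_pos hpos hmono hw (hr_pos x hx))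
    (fun x hx ↦ (volumeAreaRatio_pos hpos hmono (hr_pos x hx)).le.trans_eq
      (hderiv (hr_pos x hx)).symm)
    (fun x hx ↦ (hderiv (hr_pos x hx)).trans_le
      (volumeAreaRatio_le_sqrt_two_mul_sqrt hpos hmono hw (hr_pos x hx)))
    (fun x hx ↦ hH3 x (hr.trans hx))
  have hconst : 1 + √2 * 1 / 2 = (1 + √2) / √2 := by
    rw [add_div, div_self (sqrt_ne_zero'.2 two_pos), mul_one, sqrt_div_self', add_comm]
  rwa [hconst, div_one] at hbound

/-- If `ψ` is a Cartan-Hadamard model function and `H'''(r) ≤ K H'(r)/H(r)` for all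
`r ≥ r₀`, then `-H''(r) ≤ √2 + 2K log((1+√2)/√2)` for all `r ≥ r₀`; in particular there
is a constant `Khat > 0` (depending only on `K`) with `-H''(r) ≤ Khat` for all `r ≥ r₀`. -/
theorem statement5 (N : ℕ) (hN : 2 ≤ N) (ψ : ℝ → ℝ)
    (hsmooth : ContDiffOn ℝ (⊤ : ℕ∞) ψ (Ici 0))
    (hψ0 : ψ 0 = 0) (hψ'0 : deriv ψ 0 = 1)
    (hψpos : ∀ r > (0:ℝ), 0 < ψ r)
    (hconv : ConvexOn ℝ (Ici 0) ψ)
    (r₀ K : ℝ) (hr₀ : 0 < r₀) (hK : 0 < K)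
    (hH3 : ∀ r ≥ r₀, deriv (deriv (deriv (Hfun N ψ))) r
        ≤ K * deriv (Hfun N ψ) r / Hfun N ψ r) :
    (∀ r ≥ r₀, -(deriv (deriv (Hfun N ψ)) r)
        ≤ Real.sqrt 2 + 2 * K * Real.log ((1 + Real.sqrt 2) / Real.sqrt 2)) ∧
    ∃ Khat : ℝ, 0 < Khat ∧ ∀ r ≥ r₀, -(deriv (deriv (Hfun N ψ)) r) ≤ Khat := by
  rw [Hfun_eq_torsionFunction] at hH3 ⊢
  have hw : ContDiffOn ℝ (⊤ : ℕ∞) (fun t ↦ ψ t ^ (N - 1)) (Ioi 0) :=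
    (hsmooth.mono Ioi_subset_Ici_self).pow _
  have hbound := statement5_general (fun r hr ↦ pow_pos (hψpos r hr) (N - 1))
    (monotoneOn_pow_Ioi_of_convexOn hψ0 hψpos hconv (N - 1)) (hw.differentiableOn (by simp))
    (((contDiffOn_infty_iff_deriv_of_isOpen isOpen_Ioi).1 hw).2.differentiableOn (by simp))
    hr₀ hK.le hH3
  exact ⟨hbound, _, sqrt_two_add_two_mul_log_pos hK.le, hbound⟩
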